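/- Let K be a field with char K ≠ 2, V a K-vector space, and ξ a nondegenerate alternating bilinear form on V, with H_ξ = { ⟨u⟩ + ⟨v⟩ : u, v ∈ V∖{0}, ξ(u,v) = 0 } the corresponding hyperplane of V₂(ℙ(V)). Then: (1) H_ξ is spiky — for every point e ∈ H_ξ there is a block L of V₂(ℙ(V)) with L ∩ H_ξ = {e}; (2) H_ξ is not flappy — for every projective line L₀ of ℙ(V), the block 2L₀ = {2x : x ∈ L₀} is contained in H_ξ, and every strong subspace of V₂(ℙ(V)) containing 2L₀ is contained in the leaf 2S = {2x : x a point of ℙ(V)} ⊆ H_ξ. -/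

import Mathlib

def veroBlock {S : Type*} (e : Multiset S) (r : ℕ) (B : Set S) : Set (Multiset S) :=
  { m | ∃ x ∈ B, m = e + Multiset.replicate r x }

def veroBlocks {S : Type*} (k : ℕ) (L : Set (Set S)) : Set (Set (Multiset S)) :=
  { Bl | ∃ (r : ℕ) (e : Multiset S) (B : Set S),
      0 < r ∧ r ≤ k ∧ Multiset.card e = k - r ∧ B ∈ L ∧ Bl = veroBlock e r B }

def veroPoints (S : Type*) (k : ℕ) : Set (Multiset S) :=
  { m | Multiset.card m = k }

def veroLeaves (S : Type*) (k : ℕ) : Set (Set (Multiset S)) :=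
  { T | ∃ (r : ℕ) (e : Multiset S),
      0 < r ∧ r ≤ k ∧ Multiset.card e = k - r ∧ T = veroBlock e r Set.univ }

def VerAdj {S : Type*} (k : ℕ) (L : Set (Set S)) (f g : Multiset S) : Prop :=
  ∃ Bl ∈ veroBlocks k L, f ∈ Bl ∧ g ∈ Bl

def AtLeastThree {α : Type*} (B : Set α) : Prop :=
  ∃ a b c, a ∈ B ∧ b ∈ B ∧ c ∈ B ∧ a ≠ b ∧ a ≠ c ∧ b ≠ c

def IsPLS {α : Type*} (L : Set (Set α)) : Prop :=
  L.Nonempty ∧ (∀ B ∈ L, AtLeastThree B) ∧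
    ∀ p q : α, p ≠ q → ∀ B₁ ∈ L, ∀ B₂ ∈ L,
      p ∈ B₁ → q ∈ B₁ → p ∈ B₂ → q ∈ B₂ → B₁ = B₂

def IsLinearSpace {α : Type*} (L : Set (Set α)) : Prop :=
  IsPLS L ∧ ∀ p q : α, p ≠ q → ∃ B ∈ L, p ∈ B ∧ q ∈ B

def IsSubspace {α : Type*} (Blk : Set (Set α)) (X : Set α) : Prop :=
  ∀ B ∈ Blk, (∃ p ∈ B ∩ X, ∃ q ∈ B ∩ X, p ≠ q) → B ⊆ X

def IsHyperplane {α : Type*} (L : Set (Set α)) (X : Set α) : Prop :=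
  IsSubspace L X ∧ (∀ B ∈ L, (B ∩ X).Nonempty) ∧ X ≠ Set.univ

def Veblenian {α : Type*} (L : Set (Set α)) : Prop :=
  ∀ (p : α) (L₁ L₂ M₁ M₂ : Set α), L₁ ∈ L → L₂ ∈ L → M₁ ∈ L → M₂ ∈ L →
    L₁ ≠ L₂ → L₁ ≠ M₁ → L₁ ≠ M₂ → L₂ ≠ M₁ → L₂ ≠ M₂ → M₁ ≠ M₂ →
    p ∈ L₁ → p ∈ L₂ → p ∉ M₁ → p ∉ M₂ →
    (L₁ ∩ M₁).Nonempty → (L₁ ∩ M₂).Nonempty →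
    (L₂ ∩ M₁).Nonempty → (L₂ ∩ M₂).Nonempty →
    (M₁ ∩ M₂).Nonempty

def IsVeroHyperplane {S : Type*} (k : ℕ) (L : Set (Set S)) (X : Set (Multiset S)) : Prop :=
  X ⊆ veroPoints S k ∧ X ≠ veroPoints S k ∧
    IsSubspace (veroBlocks k L) X ∧ ∀ B ∈ veroBlocks k L, (B ∩ X).Nonempty

def addPt {S : Type*} (a : S) (m : Set S) : Set (Multiset S) :=
  { t | ∃ x ∈ m, t = ({a, x} : Multiset S) }

def dbl {S : Type*} (m : Set S) : Set (Multiset S) :=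
  { t | ∃ x ∈ m, t = ({x, x} : Multiset S) }

def projLines (K V : Type*) [Field K] [AddCommGroup V] [Module K V] :
    Set (Set (Projectivization K V)) :=
  { L | ∃ W : Submodule K V, Module.finrank K ↥W = 2 ∧
      L = { p : Projectivization K V | p.submodule ≤ W } }

def Hxi {K V : Type*} [Field K] [AddCommGroup V] [Module K V]
    (ξ : V →ₗ[K] V →ₗ[K] K) : Set (Multiset (Projectivization K V)) :=
  { m | ∃ (u v : V) (hu : u ≠ 0) (hv : v ≠ 0), ξ u v = 0 ∧
      m = ({Projectivization.mk K u hu, Projectivization.mk K v hv} :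
        Multiset (Projectivization K V)) }

/-!
For a fixed point `p`, the points `q` with `p + q ∈ H_ξ` form the polar hyperplane of `p`, which
is proper because `ξ` is nondegenerate. A line joining a point `q` of a proper projective subspace
to a point outside it meets the subspace in `q` only; adding `p` to all points of such a line
gives a block that meets `H_ξ` exactly in `p + q`.

If a `k`-multiset `f` is adjacent to `k·p`, then either `f` itself is some `k·y`, or the common
block is `(k - r)·p + r·B` with `r < k` and so `p` occurs in `f`. Since `f` involves at most `k`
points, an `f` outside the leaf cannot be adjacent to `k·p` for more than `k` points `p`, whereas
a projective line has more than two points.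
-/

section Multiset

variable {S : Type*} {L : Set (Set S)} {B : Set S} {k : ℕ}

theorem multiset_pair_eq_pair_iff {a b c d : S} :
    ({a, b} : Multiset S) = {c, d} ↔ a = c ∧ b = d ∨ a = d ∧ b = c := by
  change (([a, b] : List S) : Multiset S) = ([c, d] : List S) ↔ _
  rw [Multiset.coe_eq_coe, List.perm_pair]
  simp only [List.cons.injEq, and_true]

theorem addPt_mem_veroBlocks (a : S) (hB : B ∈ L) : addPt a B ∈ veroBlocks 2 L :=
  ⟨1, {a}, B, one_pos, one_le_two, Multiset.card_singleton a, hB, rfl⟩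

theorem addPt_eq_image (a : S) (B : Set S) :
    addPt a B = (fun x => ({a, x} : Multiset S)) '' B := by
  simp only [addPt, Set.image, eq_comm]

theorem veroBlock_zero_two (B : Set S) : veroBlock 0 2 B = dbl B := by
  simp only [veroBlock, zero_add]
  rfl

theorem VerAdj.mem_or_mem_veroBlock_univ {f : Multiset S} {p : S}
    (h : VerAdj k L f (Multiset.replicate k p)) : p ∈ f ∨ f ∈ veroBlock 0 k Set.univ := by
  obtain ⟨_, ⟨r, e, B, -, -, -, -, rfl⟩, ⟨x, -, rfl⟩, y, -, hp⟩ := h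
  obtain rfl | ⟨q, hq⟩ := e.empty_or_exists_mem
  · obtain rfl : r = k := by simpa using (congrArg Multiset.card hp).symm
    exact Or.inr ⟨x, Set.mem_univ x, rfl⟩
  · have hqp : q = p := Multiset.eq_of_mem_replicate (hp ▸ Multiset.mem_add.2 (Or.inl hq))
    exact Or.inl (Multiset.mem_add.2 (Or.inl (hqp ▸ hq)))

theorem encard_setOf_mem_le_card (f : Multiset S) : {p | p ∈ f}.encard ≤ f.card := by
  classical
  have hf : {p | p ∈ f} = (f.toFinset : Set S) := Set.ext fun p => Multiset.mem_toFinset.symm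
  rw [hf, Set.encard_coe_eq_coe_finsetCard]
  exact_mod_cast f.toFinset_card_le

theorem subset_veroBlock_univ_of_pairwise_verAdj (hB : k < B.encard) {X : Set (Multiset S)}
    (hX : X ⊆ veroPoints S k) (hadj : X.Pairwise (VerAdj k L)) (hBX : veroBlock 0 k B ⊆ X) :
    X ⊆ veroBlock 0 k Set.univ := by
  intro f hf
  by_contra hleaf
  have hBf : B ⊆ {p | p ∈ f} := by
    intro p hp
    have hkp : Multiset.replicate k p ∈ X := hBX ⟨p, hp, (zero_add _).symm⟩
    have hne : f ≠ Multiset.replicate k p := by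
      rintro rfl
      exact hleaf ⟨p, Set.mem_univ p, (zero_add _).symm⟩
    exact (hadj hf hkp hne).mem_or_mem_veroBlock_univ.resolve_right hleaf
  have hBk : B.encard ≤ k := by
    simpa only [show f.card = k from hX hf] using
      (Set.encard_le_encard hBf).trans (encard_setOf_mem_le_card f)
  exact hB.not_ge hBk

end Multiset

section ProjectivePoints

variable {K V : Type*} [DivisionRing K] [AddCommGroup V] [Module K V]

theorem submodule_le_submodule_iff_eq {p q : Projectivization K V} :
    p.submodule ≤ q.submodule ↔ p = q := by
  induction p with | h u hu =>
  induction q with | h v hv =>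
  rw [Projectivization.submodule_mk, Projectivization.submodule_mk,
    Submodule.span_singleton_le_iff_mem, Submodule.mem_span_singleton,
    Projectivization.mk_eq_mk_iff']

theorem mk_ne_mk_of_linearIndependent {u v : V} (hu : u ≠ 0) (hv : v ≠ 0)
    (h : LinearIndependent K ![u, v]) :
    Projectivization.mk K u hu ≠ Projectivization.mk K v hv :=
  (Projectivization.independent_pair_iff_ne _ _).1
    ((Projectivization.independent_mk_iff_LinearIndependent hu hv).2 h)

theorem two_lt_encard_setOf_submodule_le {W : Submodule K V} {u v : V} (hu : u ∈ W) (hv : v ∈ W)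
    (huv : LinearIndependent K ![u, v]) :
    2 < {x : Projectivization K V | x.submodule ≤ W}.encard := by
  have hu0 : u ≠ 0 := huv.ne_zero 0
  have hv0 : v ≠ 0 := huv.ne_zero 1
  have hu_add : LinearIndependent K ![u, u + v] := LinearIndependent.pair_add_right_iff.2 huv
  have hadd_v : LinearIndependent K ![u + v, v] := LinearIndependent.pair_add_left_iff.2 huv
  have huv0 : u + v ≠ 0 := hadd_v.ne_zero 0
  have mk_mem {w : V} (hw : w ≠ 0) (hwW : w ∈ W) : (Projectivization.mk K w hw).submodule ≤ W := by
    rwa [Projectivization.submodule_mk, Submodule.span_singleton_le_iff_mem]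
  have hthree : ({.mk K u hu0, .mk K (u + v) huv0, .mk K v hv0} :
      Set (Projectivization K V)).encard = 3 :=
    Set.encard_eq_three.2 ⟨_, _, _, mk_ne_mk_of_linearIndependent _ _ hu_add,
      mk_ne_mk_of_linearIndependent _ _ huv, mk_ne_mk_of_linearIndependent _ _ hadd_v, rfl⟩
  have hthree_le : 3 ≤ {x : Projectivization K V | x.submodule ≤ W}.encard := by
    refine hthree ▸ Set.encard_le_encard ?_
    rintro _ (rfl | rfl | rfl)
    exacts [mk_mem _ hu, mk_mem _ (W.add_mem hu hv), mk_mem _ hv]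
  exact lt_of_lt_of_le (by norm_num) hthree_le

end ProjectivePoints

section ProjectiveLines

variable {K V : Type*} [Field K] [AddCommGroup V] [Module K V]

theorem setOf_submodule_le_sup_mem_projLines {p q : Projectivization K V} (hpq : p ≠ q) :
    {x : Projectivization K V | x.submodule ≤ p.submodule ⊔ q.submodule} ∈ projLines K V := by
  refine ⟨_, ?_, rfl⟩
  have hspan : Submodule.span K (Set.range ![p.rep, q.rep]) = p.submodule ⊔ q.submodule := by
    rw [Matrix.range_cons_cons_empty, Submodule.span_insert, p.submodule_eq, q.submodule_eq]
  rw [← hspan, finrank_span_eq_card (Projectivization.linearIndependent_pair_iff_ne.2 hpq),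
    Fintype.card_fin]

theorem exists_mem_projLines_inter_eq_singleton {H : Submodule K V} (hH : H ≠ ⊤)
    {q : Projectivization K V} (hq : q.submodule ≤ H) :
    ∃ B ∈ projLines K V, B ∩ {x | x.submodule ≤ H} = {q} := by
  obtain ⟨w, -, hwH⟩ := SetLike.exists_of_lt hH.lt_top
  have hw : w ≠ 0 := fun h => hwH (h ▸ H.zero_mem)
  set r := Projectivization.mk K w hw with hr
  have hrH : Disjoint r.submodule H := by
    rw [hr, Projectivization.submodule_mk, disjoint_comm, Submodule.disjoint_span_singleton' hw]
    exact hwH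
  have hqr : q ≠ r := by
    rintro rfl
    exact hwH (hq (Submodule.mem_span_singleton_self w))
  refine ⟨_, setOf_submodule_le_sup_mem_projLines hqr, ?_⟩
  have hinf : (q.submodule ⊔ r.submodule) ⊓ H = q.submodule := by
    rw [sup_inf_assoc_of_le _ hq, hrH.eq_bot, sup_bot_eq]
  ext x
  simp only [Set.mem_inter_iff, Set.mem_ofPred_eq, ← le_inf_iff, hinf,
    submodule_le_submodule_iff_eq, Set.mem_singleton_iff]

theorem two_lt_encard_of_mem_projLines {L : Set (Projectivization K V)}
    (hL : L ∈ projLines K V) : 2 < L.encard := by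
  obtain ⟨W, hW, rfl⟩ := hL
  have : Nontrivial W := Module.nontrivial_of_finrank_pos (R := K) (by lia)
  obtain ⟨a, ha⟩ := exists_ne (0 : W)
  obtain ⟨b, hab⟩ := exists_linearIndependent_pair_of_one_lt_finrank (R := K) (by lia) ha
  exact two_lt_encard_setOf_submodule_le a.2 b.2 <| LinearIndependent.pair_iff.2 fun s t hst =>
    LinearIndependent.pair_iff.1 hab s t (Subtype.ext hst)

end ProjectiveLines

section Polarity

variable {K V : Type*} [Field K] [AddCommGroup V] [Module K V] {ξ : V →ₗ[K] V →ₗ[K] K}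

theorem mk_pair_mem_Hxi_iff (hξ : ξ.IsRefl) {u : V} (hu : u ≠ 0) {q : Projectivization K V} :
    {Projectivization.mk K u hu, q} ∈ Hxi ξ ↔ q.submodule ≤ LinearMap.ker (ξ u) := by
  constructor
  · rintro ⟨u', v', hu', hv', hu'v', hpair⟩
    have of_mk_eq {a b : V} (ha : a ≠ 0) (hb : b ≠ 0) (hab : ξ a b = 0)
        (hua : Projectivization.mk K u hu = Projectivization.mk K a ha)
        (hqb : q = Projectivization.mk K b hb) : q.submodule ≤ LinearMap.ker (ξ u) := by
      obtain ⟨c, rfl⟩ := (Projectivization.mk_eq_mk_iff' K _ _ _ _).1 hua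
      rw [hqb, Projectivization.submodule_mk, Submodule.span_singleton_le_iff_mem,
        LinearMap.mem_ker, map_smul, LinearMap.smul_apply, hab, smul_zero]
    rcases multiset_pair_eq_pair_iff.1 hpair with ⟨hup, hq⟩ | ⟨hup, hq⟩
    · exact of_mk_eq hu' hv' hu'v' hup hq
    · exact of_mk_eq hv' hu' (hξ.eq_zero hu'v') hup hq
  · induction q with | h v hv =>
    rw [Projectivization.submodule_mk, Submodule.span_singleton_le_iff_mem, LinearMap.mem_ker]
    exact fun huv => ⟨u, v, hu, hv, huv, rfl⟩

theorem exists_mem_veroBlocks_inter_Hxi_eq_singleton (hξ : ξ.IsRefl) (hnd : ξ.SeparatingLeft)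
    {e : Multiset (Projectivization K V)} (he : e ∈ Hxi ξ) :
    ∃ B ∈ veroBlocks 2 (projLines K V), B ∩ Hxi ξ = {e} := by
  obtain ⟨u, v, hu, hv, -, rfl⟩ := id he
  have hker : LinearMap.ker (ξ u) ≠ ⊤ := fun h =>
    hu (hnd u (LinearMap.congr_fun (LinearMap.ker_eq_top.1 h)))
  obtain ⟨B, hB, hBv⟩ :=
    exists_mem_projLines_inter_eq_singleton hker ((mk_pair_mem_Hxi_iff hξ hu).1 he)
  have hpolar : (fun q => {Projectivization.mk K u hu, q}) ⁻¹' Hxi ξ =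
      {q : Projectivization K V | q.submodule ≤ LinearMap.ker (ξ u)} :=
    Set.ext fun q => mk_pair_mem_Hxi_iff hξ hu
  refine ⟨addPt (Projectivization.mk K u hu) B, addPt_mem_veroBlocks _ hB, ?_⟩
  rw [addPt_eq_image, ← Set.image_inter_preimage, hpolar, hBv, Set.image_singleton]

theorem dbl_subset_Hxi (halt : ξ.IsAlt) (B : Set (Projectivization K V)) : dbl B ⊆ Hxi ξ := by
  rintro _ ⟨p, -, rfl⟩
  induction p with | h v hv => exact ⟨v, v, hv, hv, halt v, rfl⟩

theorem stmt_13_general (halt : ξ.IsAlt) (hnd : ξ.SeparatingLeft) :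
    (∀ e ∈ Hxi ξ, ∃ B ∈ veroBlocks 2 (projLines K V), B ∩ Hxi ξ = {e}) ∧
    dbl Set.univ ⊆ Hxi ξ ∧
    ∀ L₀ ∈ projLines K V, dbl L₀ ⊆ Hxi ξ ∧
      ∀ X ⊆ veroPoints (Projectivization K V) 2, X.Pairwise (VerAdj 2 (projLines K V)) →
        dbl L₀ ⊆ X → X ⊆ dbl Set.univ := by
  refine ⟨fun e => exists_mem_veroBlocks_inter_Hxi_eq_singleton halt.isRefl hnd,
    dbl_subset_Hxi halt _, fun L₀ hL₀ => ⟨dbl_subset_Hxi halt _, fun X hX hadj hL₀X => ?_⟩⟩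
  rw [← veroBlock_zero_two] at hL₀X ⊢
  exact subset_veroBlock_univ_of_pairwise_verAdj (two_lt_encard_of_mem_projLines hL₀) hX hadj hL₀X

end Polarity

theorem stmt_13 {K V : Type*} [Field K] [AddCommGroup V] [Module K V]
    (hchar : (2 : K) ≠ 0)
    (ξ : V →ₗ[K] V →ₗ[K] K) (halt : ∀ u : V, ξ u u = 0)
    (hnd : ∀ u : V, (∀ v : V, ξ u v = 0) → u = 0) :
    (∀ e ∈ Hxi ξ, ∃ B ∈ veroBlocks 2 (projLines K V), B ∩ Hxi ξ = {e}) ∧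
    ({ m : Multiset (Projectivization K V) | ∃ p : Projectivization K V,
        m = ({p, p} : Multiset (Projectivization K V)) } ⊆ Hxi ξ) ∧
    (∀ L₀ ∈ projLines K V,
      ({ m : Multiset (Projectivization K V) |
          ∃ p ∈ L₀, m = ({p, p} : Multiset (Projectivization K V)) } ⊆ Hxi ξ) ∧
      (∀ X : Set (Multiset (Projectivization K V)),
        X ⊆ veroPoints (Projectivization K V) 2 →
        IsSubspace (veroBlocks 2 (projLines K V)) X →
        (∀ a ∈ X, ∀ b ∈ X, a ≠ b → VerAdj 2 (projLines K V) a b) →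
        { m : Multiset (Projectivization K V) |
          ∃ p ∈ L₀, m = ({p, p} : Multiset (Projectivization K V)) } ⊆ X →
        X ⊆ { m : Multiset (Projectivization K V) | ∃ p : Projectivization K V,
          m = ({p, p} : Multiset (Projectivization K V)) })) := by
  obtain ⟨hspiky, hleaf, hflappy⟩ := stmt_13_general halt hnd
  simp only [dbl, Set.mem_univ, true_and] at hleaf hflappy
  exact ⟨hspiky, hleaf, fun L₀ hL₀ => ⟨(hflappy L₀ hL₀).1,
    fun X hX _ hadj hL₀X => (hflappy L₀ hL₀).2 X hX (fun _ ha _ => hadj _ ha _) hL₀X⟩⟩
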